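/- There exist constants C₁ ≥ 1 and δ₀ ∈ (0,1) such that for all n ≥ 1, all integers j with 0 ≤ j ≤ δ₀ n, and all integers x with 0 ≤ x ≤ n/2: |K_j(x)/K_j(0)| ≤ C₁ · (1 − 2j/n)^x. -/

import Mathlib

open Finset

/-- The Krawtchouk polynomial `K_j` (for the cube `𝔽₂ⁿ`) evaluated at an
integer argument `x`: `K_j(x) = Σ_{k=0}^{j} (-1)^k C(x,k) C(n-x, j-k)`. -/
def kraw (n j x : ℕ) : ℝ :=
  ∑ k ∈ Finset.range (j + 1),
    (-1 : ℝ) ^ k * (x.choose k : ℝ) * ((n - x).choose (j - k) : ℝ)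

open Polynomial in
/-- The generating polynomial of the Krawtchouk values. -/
noncomputable def krawGen (a b : ℕ) : Polynomial ℝ := (1 - X) ^ a * (1 + X) ^ b

open Polynomial in
lemma coeff_one_sub_X_pow' (a k : ℕ) :
    ((1 - X : Polynomial ℝ) ^ a).coeff k = (-1) ^ k * (a.choose k : ℝ) := by
  have h : (1 - X : Polynomial ℝ) ^ a = ((1 + X : Polynomial ℝ) ^ a).comp (C (-1) * X) := by
    simp [sub_eq_add_neg]
  rw [h, comp_C_mul_X_coeff, coeff_one_add_X_pow]
  ring

lemma kraw_eq_coeff (n j x : ℕ) : kraw n j x = (krawGen x (n - x)).coeff j := by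
  unfold kraw krawGen
  rw [Polynomial.coeff_mul, Finset.Nat.sum_antidiagonal_eq_sum_range_succ_mk]
  apply Finset.sum_congr rfl
  intro k _
  rw [coeff_one_sub_X_pow', Polynomial.coeff_one_add_X_pow]

lemma kraw_zero (n j : ℕ) : kraw n j 0 = (n.choose j : ℝ) := by
  rw [kraw_eq_coeff, krawGen]
  simp [Polynomial.coeff_one_add_X_pow]

open Polynomial in
lemma gen_rec (a b : ℕ) :
    2 * (X * derivative (krawGen (a + 1) (b + 1))) =
      ((b : Polynomial ℝ) + 1) * (krawGen (a + 1) (b + 1) - krawGen (a + 2) b)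
        - ((a : Polynomial ℝ) + 1) * (krawGen a (b + 2) - krawGen (a + 1) (b + 1)) := by
  unfold krawGen
  simp [derivative_mul, derivative_pow]
  ring

open Polynomial in
lemma gen_rec0 (b : ℕ) :
    2 * (X * derivative (krawGen 0 (b + 1))) =
      ((b : Polynomial ℝ) + 1) * (krawGen 0 (b + 1) - krawGen 1 b) := by
  unfold krawGen
  simp [derivative_pow]
  ring

open Polynomial in
lemma coeff_two_X_deriv (P : Polynomial ℝ) (j : ℕ) :
    (2 * (X * derivative P)).coeff j = 2 * j * P.coeff j := by
  have : (2 : Polynomial ℝ) = C 2 := (map_ofNat C 2).symm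
  rw [this, coeff_C_mul]
  cases j with
  | zero => simp
  | succ k => rw [coeff_X_mul, coeff_derivative]; push_cast; ring

lemma kraw_rec (n j y : ℕ) (h : y + 2 ≤ n) :
    ((n : ℝ) - (y + 1)) * kraw n j (y + 2) =
      ((n : ℝ) - 2 * j) * kraw n j (y + 1) - (y + 1) * kraw n j y := by
  obtain ⟨b, rfl⟩ := Nat.exists_eq_add_of_le h
  have e := congrArg (fun P => Polynomial.coeff P j) (gen_rec y b)
  simp only [coeff_two_X_deriv] at e
  have h1 : ((b : Polynomial ℝ) + 1) = Polynomial.C ((b : ℝ) + 1) := by simp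
  have h2 : ((y : Polynomial ℝ) + 1) = Polynomial.C ((y : ℝ) + 1) := by simp
  rw [h1, h2, Polynomial.coeff_sub, Polynomial.coeff_C_mul, Polynomial.coeff_C_mul,
    Polynomial.coeff_sub, Polynomial.coeff_sub] at e
  rw [kraw_eq_coeff, kraw_eq_coeff, kraw_eq_coeff,
    show y + 2 + b - (y + 2) = b by omega, show y + 2 + b - (y + 1) = b + 1 by omega,
    show y + 2 + b - y = b + 2 by omega]
  push_cast
  linarith

lemma kraw_rec0 (n j : ℕ) (h : 1 ≤ n) :
    (n : ℝ) * kraw n j 1 = ((n : ℝ) - 2 * j) * kraw n j 0 := by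
  obtain ⟨b, rfl⟩ := Nat.exists_eq_add_of_le' h
  have e := congrArg (fun P => Polynomial.coeff P j) (gen_rec0 b)
  simp only [coeff_two_X_deriv] at e
  have h1 : ((b : Polynomial ℝ) + 1) = Polynomial.C ((b : ℝ) + 1) := by simp
  rw [h1, Polynomial.coeff_C_mul, Polynomial.coeff_sub] at e
  rw [kraw_eq_coeff, kraw_eq_coeff]
  simp only [Nat.add_sub_cancel, Nat.sub_zero]
  push_cast
  linarith

/-- Ratio control before the oscillatory region. -/
lemma kraw_ratio (n j x : ℕ) (hn : 1 ≤ n) (hj : 4 * (j : ℝ) ≤ n) (hx : 2 * (x : ℝ) ≤ n)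
    (hreg : 8 * (j : ℝ) * n ≤ ((n : ℝ) - 2 * x) ^ 2) (y : ℕ) (hy : y < x) :
    0 < kraw n j y ∧
    (1 - ((n : ℝ) - 2 * x) / (2 * n)) * kraw n j y ≤ kraw n j (y + 1) ∧
    kraw n j (y + 1) ≤ (1 - 2 * (j : ℝ) / n) * kraw n j y := by
  have hn0 : (0 : ℝ) < n := by exact_mod_cast hn
  have hj0 : (0 : ℝ) ≤ j := Nat.cast_nonneg _
  have hx0 : (0 : ℝ) ≤ x := Nat.cast_nonneg _
  set t : ℝ := ((n : ℝ) - 2 * x) / (2 * n) with ht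
  set a : ℝ := 1 - 2 * (j : ℝ) / n with ha
  have htn : 2 * n * t = (n : ℝ) - 2 * x := by rw [ht]; field_simp
  have han : n * a = (n : ℝ) - 2 * j := by rw [ha]; field_simp
  have ht0 : 0 ≤ t := by rw [ht]; apply div_nonneg <;> linarith
  have ht1 : t ≤ 1 / 2 := by
    rw [ht, div_le_iff₀ (by linarith)]; linarith
  have hta : 2 * (j : ℝ) ≤ n * t ^ 2 := by
    have : 8 * (j : ℝ) * n ≤ (4 * n * t ^ 2) * n := by
      rw [← htn] at hreg; linarith
    have := le_of_mul_le_mul_right this hn0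
    linarith
  have ha1 : a ≤ 1 := by
    have : 0 ≤ 2 * (j : ℝ) / n := by positivity
    rw [ha]; linarith
  have ha0 : 1 / 2 ≤ a := by
    have : 2 * (j : ℝ) / n ≤ 1 / 2 := by rw [div_le_iff₀ hn0]; linarith
    rw [ha]; linarith
  induction y with
  | zero =>
    have hpos : 0 < kraw n j 0 := by
      rw [kraw_zero]
      have : j ≤ n := by
        have : (j : ℝ) ≤ n := by linarith
        exact_mod_cast this
      exact_mod_cast Nat.choose_pos this
    have hr := kraw_rec0 n j hn
    have h1 : kraw n j 1 = a * kraw n j 0 := by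
      apply mul_left_cancel₀ hn0.ne'
      rw [hr, ← han]; ring
    refine ⟨hpos, ?_, h1.le⟩
    rw [zero_add, h1]
    apply mul_le_mul_of_nonneg_right _ hpos.le
    nlinarith
  | succ y ih =>
    obtain ⟨hp, hl, hu⟩ := ih (by omega)
    have hyx : (y : ℝ) + 1 + 1 ≤ x := by exact_mod_cast hy
    have hy0 : (0 : ℝ) ≤ y := Nat.cast_nonneg _
    have hn2 : y + 2 ≤ n := by
      have : ((y + 2 : ℕ) : ℝ) ≤ n := by push_cast; linarith
      exact_mod_cast this
    have hr := kraw_rec n j y hn2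
    have hp1 : 0 < kraw n j (y + 1) := lt_of_lt_of_le (mul_pos (by linarith) hp) hl
    have hny : (0 : ℝ) < (n : ℝ) - (y + 1) := by linarith
    rw [show y + 1 + 1 = y + 2 by omega]
    set k0 := kraw n j y
    set k1 := kraw n j (y + 1)
    set k2 := kraw n j (y + 2)
    refine ⟨hp1, ?_, ?_⟩
    · apply le_of_mul_le_mul_left _ hny
      rw [hr]
      apply le_of_mul_le_mul_left _ (show (0 : ℝ) < 1 - t by linarith)
      have h3 : ((y : ℝ) + 1) * ((1 - t) * k0) ≤ (y + 1) * k1 :=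
        mul_le_mul_of_nonneg_left hl (by linarith)
      have h4 : ((n : ℝ) - (y + 1)) * (1 - t) ^ 2 + (y + 1) ≤ (1 - t) * (n - 2 * j) := by
        have e1 : t * ((y : ℝ) + 1) ≤ t * x := mul_le_mul_of_nonneg_left (by linarith) ht0
        have e2 : t * (2 * n * t) = t * ((n : ℝ) - 2 * x) := by rw [htn]
        have e3 : 0 ≤ t ^ 2 * ((y : ℝ) + 1) := by positivity
        have e4 : 0 ≤ t * j := by positivity
        nlinarith
      have h5 := mul_le_mul_of_nonneg_right h4 hp1.le
      linarith
    · apply le_of_mul_le_mul_left _ hny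
      rw [hr]
      have h3 : ((y : ℝ) + 1) * k1 ≤ (y + 1) * (a * k0) :=
        mul_le_mul_of_nonneg_left hu (by linarith)
      have h3' : a * k1 ≤ k0 := by
        have e1 : a * k1 ≤ a * (a * k0) := mul_le_mul_of_nonneg_left hu (by linarith)
        have e2 : a * (a * k0) ≤ k0 := by
          have : a * a ≤ 1 := by nlinarith
          nlinarith
        linarith
      have h4 := mul_le_mul_of_nonneg_left h3' (show (0 : ℝ) ≤ (y : ℝ) + 1 by linarith)
      rw [← han]
      linarith

lemma kraw_case1 (n j x : ℕ) (hn : 1 ≤ n) (hj : 4 * (j : ℝ) ≤ n) (hx : 2 * (x : ℝ) ≤ n)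
    (hreg : 8 * (j : ℝ) * n ≤ ((n : ℝ) - 2 * x) ^ 2) :
    |kraw n j x| ≤ (1 - 2 * (j : ℝ) / n) ^ x * kraw n j 0 := by
  have hR := kraw_ratio n j x hn hj hx hreg
  have hn0 : (0 : ℝ) < n := by exact_mod_cast hn
  have ha0 : 0 ≤ 1 - 2 * (j : ℝ) / n := by
    have : 2 * (j : ℝ) / n ≤ 1 / 2 := by rw [div_le_iff₀ hn0]; linarith
    linarith
  have hk0 : 0 ≤ kraw n j 0 := by rw [kraw_zero]; positivity
  have key : ∀ y, y ≤ x → 0 ≤ kraw n j y ∧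
      kraw n j y ≤ (1 - 2 * (j : ℝ) / n) ^ y * kraw n j 0 := by
    intro y
    induction y with
    | zero => intro _; simp [hk0]
    | succ y ih =>
      intro hy
      obtain ⟨_, h2⟩ := ih (by omega)
      obtain ⟨hp, hl, hu⟩ := hR y (by omega)
      constructor
      · refine le_trans (mul_nonneg ?_ hp.le) hl
        have : ((n : ℝ) - 2 * x) / (2 * n) ≤ 1 := by
          rw [div_le_iff₀ (by linarith)]
          have : (0 : ℝ) ≤ x := Nat.cast_nonneg _
          linarith
        linarith
      · calc _ ≤ _ := hu
          _ ≤ (1 - 2 * (j : ℝ) / n) * ((1 - 2 * (j : ℝ) / n) ^ y * kraw n j 0) :=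
            mul_le_mul_of_nonneg_left h2 ha0
          _ = _ := by ring
  obtain ⟨h1, h2⟩ := key x le_rfl
  rwa [abs_of_nonneg h1]

/-- Coefficientwise domination. -/
def Dom (P Q : Polynomial ℝ) : Prop := ∀ k, |P.coeff k| ≤ Q.coeff k

lemma Dom.mul {P Q R S : Polynomial ℝ} (h : Dom P Q) (h' : Dom R S) : Dom (P * R) (Q * S) := by
  intro k
  rw [Polynomial.coeff_mul, Polynomial.coeff_mul]
  refine (Finset.abs_sum_le_sum_abs _ _).trans (Finset.sum_le_sum fun i _ => ?_)
  rw [abs_mul]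
  exact mul_le_mul (h _) (h' _) (abs_nonneg _) ((abs_nonneg _).trans (h _))

lemma Dom.pow {P Q : Polynomial ℝ} (h : Dom P Q) (m : ℕ) : Dom (P ^ m) (Q ^ m) := by
  induction m with
  | zero =>
    intro k
    simp only [pow_zero, Polynomial.coeff_one]
    split_ifs <;> simp
  | succ m ih => rw [pow_succ, pow_succ]; exact ih.mul h

lemma Dom.bound {P Q : Polynomial ℝ} (h : Dom P Q) (j : ℕ) {r : ℝ} (hr : 0 ≤ r) :
    |P.coeff j| * r ^ j ≤ Q.eval r := by
  have hQ : ∀ k, 0 ≤ Q.coeff k := fun k => (abs_nonneg _).trans (h k)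
  refine (mul_le_mul_of_nonneg_right (h j) (pow_nonneg hr j)).trans ?_
  rw [Polynomial.eval_eq_sum_range]
  by_cases hj : j ≤ Q.natDegree
  · exact Finset.single_le_sum (f := fun i => Q.coeff i * r ^ i)
      (fun i _ => mul_nonneg (hQ i) (pow_nonneg hr i)) (Finset.mem_range.2 (by omega))
  · rw [Polynomial.coeff_eq_zero_of_natDegree_lt (by omega), zero_mul]
    exact Finset.sum_nonneg fun i _ => mul_nonneg (hQ i) (pow_nonneg hr i)

open Polynomial in
lemma kraw_bound (n j x d : ℕ) (hd : n = 2 * x + d) {r : ℝ} (hr : 0 ≤ r) :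
    |kraw n j x| * r ^ j ≤ (1 + r ^ 2) ^ x * (1 + r) ^ d := by
  have h1 : Dom (1 - X ^ 2) (1 + X ^ 2) := by
    intro k
    simp only [coeff_sub, coeff_add, coeff_one, coeff_X_pow]
    split_ifs <;> norm_num
  have h2 : Dom (1 + X) (1 + X) := by
    intro k
    simp only [coeff_add, coeff_one, coeff_X]
    split_ifs <;> norm_num
  have h := ((h1.pow x).mul (h2.pow d)).bound j hr
  have e : krawGen x (n - x) = (1 - X ^ 2) ^ x * (1 + X) ^ d := by
    rw [krawGen, hd, show 2 * x + d - x = x + d by omega, pow_add, ← mul_assoc, ← mul_pow]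
    congr 2
    ring
  rw [kraw_eq_coeff, e]
  simpa using h

lemma div_pow_le_choose (n j : ℕ) (h : j ≤ n) : ((n : ℝ) / j) ^ j ≤ n.choose j := by
  induction j generalizing n with
  | zero => simp
  | succ j ih =>
    obtain ⟨m, rfl⟩ := Nat.exists_eq_add_of_le' (show 1 ≤ n by omega)
    have hm := ih m (by omega)
    have hjm : (j : ℝ) ≤ m := by exact_mod_cast (show j ≤ m by omega)
    have hc : ((m + 1).choose (j + 1) : ℝ) * (j + 1) = (m + 1) * m.choose j := by
      exact_mod_cast (Nat.add_one_mul_choose_eq m j).symm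
    have hp : (((m : ℝ) + 1) / (j + 1)) ^ j ≤ m.choose j := by
      refine le_trans ?_ hm
      rcases Nat.eq_zero_or_pos j with rfl | hj
      · simp
      · have hj0 : (0 : ℝ) < j := by exact_mod_cast hj
        apply pow_le_pow_left₀ (by positivity)
        rw [div_le_div_iff₀ (by positivity) hj0]
        linarith
    have e : ((m + 1).choose (j + 1) : ℝ) = (m + 1) / (j + 1) * m.choose j := by
      field_simp
      linarith
    rw [e, pow_succ']
    push_cast
    gcongr

lemma kraw_case2 (n j x : ℕ) (hj1 : 1 ≤ j) (hn : 1 ≤ n) (hj : (j : ℝ) ≤ Real.exp (-12) * n)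
    (hj4 : 4 * (j : ℝ) ≤ n) (hx : 2 * (x : ℝ) ≤ n)
    (hreg : ((n : ℝ) - 2 * x) ^ 2 < 8 * (j : ℝ) * n) :
    |kraw n j x| ≤ (1 - 2 * (j : ℝ) / n) ^ x * kraw n j 0 := by
  have hn0 : (0 : ℝ) < n := by exact_mod_cast hn
  have hj0 : (0 : ℝ) < j := by exact_mod_cast hj1
  have hx0 : (0 : ℝ) ≤ x := Nat.cast_nonneg _
  obtain ⟨d, hd⟩ : ∃ d, n = 2 * x + d := by
    apply Nat.exists_eq_add_of_le
    exact_mod_cast hx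
  have hdn : (d : ℝ) = n - 2 * x := by rw [hd]; push_cast; ring
  rw [← hdn] at hreg
  have hd0 : (0 : ℝ) ≤ d := Nat.cast_nonneg _
  set r : ℝ := Real.sqrt (j / n) with hrdef
  have hr : 0 < r := Real.sqrt_pos.2 (by positivity)
  have hr2 : r ^ 2 = j / n := Real.sq_sqrt (by positivity)
  have hr2n : r ^ 2 * n = j := by rw [hr2]; field_simp
  have hB := kraw_bound n j x d hd hr.le
  have hrd : r * d ≤ 3 * j := by
    apply le_of_sq_le_sq _ (by positivity)
    have : (r * d) ^ 2 * n ≤ (3 * j) ^ 2 * n := by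
      calc (r * d) ^ 2 * (n : ℝ) = (r ^ 2 * n) * (d : ℝ) ^ 2 := by ring
        _ = (j : ℝ) * (d : ℝ) ^ 2 := by rw [hr2n]
        _ ≤ (j : ℝ) * (8 * j * n) := by gcongr
        _ ≤ (3 * (j : ℝ)) ^ 2 * n := by nlinarith [mul_pos (mul_pos hj0 hj0) hn0]
    exact le_of_mul_le_mul_right this hn0
  have hrx : r ^ 2 * x ≤ j / 2 := by nlinarith [sq_nonneg r]
  have hE : (1 + r ^ 2) ^ x * (1 + r) ^ d ≤ Real.exp (7 / 2 * j) := by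
    calc (1 + r ^ 2) ^ x * (1 + r) ^ d ≤ Real.exp (r ^ 2) ^ x * Real.exp r ^ d := by
          gcongr
          · linarith [Real.add_one_le_exp (r ^ 2)]
          · linarith [Real.add_one_le_exp r]
      _ = Real.exp (r ^ 2 * x + r * d) := by
          rw [← Real.exp_nat_mul, ← Real.exp_nat_mul, ← Real.exp_add]; congr 1; ring
      _ ≤ _ := by apply Real.exp_le_exp.2; linarith
  have hre : r ≤ Real.exp (-6) := by
    apply le_of_sq_le_sq _ (Real.exp_pos _).le
    rw [hr2, ← Real.exp_nat_mul, div_le_iff₀ hn0]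
    norm_num
    exact hj
  have hchoose : 1 ≤ (n.choose j : ℝ) * (r ^ j) ^ 2 := by
    have hjn : j ≤ n := by
      have : (j : ℝ) ≤ n := by linarith
      exact_mod_cast this
    have h' : ((n : ℝ) / j) ^ j ≤ n.choose j := div_pow_le_choose n j hjn
    calc (1 : ℝ) = ((n : ℝ) / j) ^ j * (r ^ j) ^ 2 := by
          rw [← pow_mul, mul_comm j 2, pow_mul, hr2, ← mul_pow]
          have : (n : ℝ) / j * (j / n) = 1 := by field_simp
          rw [this, one_pow]
      _ ≤ _ := by gcongr
  have ha : Real.exp (-2 * j) ≤ (1 - 2 * (j : ℝ) / n) ^ x := by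
    have e0 : 2 * (j : ℝ) / n = 2 * r ^ 2 := by rw [hr2]; ring
    have hu : 2 * r ^ 2 ≤ 1 / 2 := by
      rw [hr2, ← mul_div_assoc, div_le_iff₀ hn0]; linarith
    rw [e0]
    have e1 : Real.exp (-(4 * r ^ 2)) ≤ 1 - 2 * r ^ 2 := by
      rw [Real.exp_neg, inv_le_iff_one_le_mul₀ (Real.exp_pos _)]
      have := Real.add_one_le_exp (4 * r ^ 2)
      nlinarith [sq_nonneg r]
    calc Real.exp (-2 * j) ≤ Real.exp (x * (-(4 * r ^ 2))) := by
          apply Real.exp_le_exp.2; linarith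
      _ = Real.exp (-(4 * r ^ 2)) ^ x := Real.exp_nat_mul _ _
      _ ≤ _ := pow_le_pow_left₀ (Real.exp_pos _).le e1 _
  have hrj : Real.exp (7 / 2 * j) * r ^ j ≤ Real.exp (-2 * j) := by
    calc Real.exp (7 / 2 * j) * r ^ j ≤ Real.exp (7 / 2 * j) * Real.exp (-6) ^ j := by gcongr
      _ = Real.exp (7 / 2 * j + j * (-6)) := by rw [← Real.exp_nat_mul, ← Real.exp_add]
      _ ≤ _ := by apply Real.exp_le_exp.2; linarith
  rw [kraw_zero]
  have hrjp : 0 < r ^ j := pow_pos hr j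
  apply le_of_mul_le_mul_right _ hrjp
  apply le_of_mul_le_mul_right _ hrjp
  calc |kraw n j x| * r ^ j * r ^ j ≤ Real.exp (7 / 2 * j) * r ^ j := by
        apply mul_le_mul_of_nonneg_right (hB.trans hE) hrjp.le
    _ ≤ Real.exp (-2 * j) := hrj
    _ ≤ (1 - 2 * (j : ℝ) / n) ^ x := ha
    _ ≤ (1 - 2 * (j : ℝ) / n) ^ x * ((n.choose j : ℝ) * (r ^ j) ^ 2) :=
        le_mul_of_one_le_right ((Real.exp_pos _).le.trans ha) hchoose
    _ = _ := by ring

theorem krawtchouk_ratio_bound_small_j :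
    ∃ C₁ : ℝ, 1 ≤ C₁ ∧ ∃ δ₀ : ℝ, 0 < δ₀ ∧ δ₀ < 1 ∧
      ∀ n : ℕ, 1 ≤ n → ∀ j : ℕ, (j : ℝ) ≤ δ₀ * n →
        ∀ x : ℕ, (x : ℝ) ≤ (n : ℝ) / 2 →
          |kraw n j x / kraw n j 0| ≤ C₁ * (1 - 2 * (j : ℝ) / n) ^ x := by
  have h4 : Real.exp (-12) ≤ 1 / 4 := by
    rw [Real.exp_neg, inv_le_comm₀ (Real.exp_pos _) (by norm_num)]
    have := Real.add_one_le_exp (12 : ℝ)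
    norm_num
    linarith
  refine ⟨1, le_rfl, Real.exp (-12), Real.exp_pos _, by linarith, ?_⟩
  intro n hn j hj x hx
  have hn0 : (0 : ℝ) < n := by exact_mod_cast hn
  have hj4 : 4 * (j : ℝ) ≤ n := by nlinarith
  have hjn : j ≤ n := by
    have : (j : ℝ) ≤ n := by linarith [(Nat.cast_nonneg j : (0 : ℝ) ≤ j)]
    exact_mod_cast this
  have hpos : 0 < kraw n j 0 := by
    rw [kraw_zero]; exact_mod_cast Nat.choose_pos hjn
  rw [abs_div, abs_of_pos hpos, div_le_iff₀ hpos, one_mul]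
  by_cases hreg : 8 * (j : ℝ) * n ≤ ((n : ℝ) - 2 * x) ^ 2
  · exact kraw_case1 n j x hn hj4 (by linarith) hreg
  · rcases Nat.eq_zero_or_pos j with rfl | hj1
    · exfalso; apply hreg; push_cast; nlinarith [sq_nonneg ((n : ℝ) - 2 * x)]
    · exact kraw_case2 n j x hj1 hn hj hj4 (by linarith) (not_le.1 hreg)
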